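/- Let σ̂_i denote the smallest singular value of F(λ̂_i) = Σ_{j=1}^k f_j(λ̂_i) F_j for i = 1,…,p. If δF_1, …, δF_k ∈ ℂ^{n×n} and nonzero vectors v_1, …, v_p ∈ ℂ^n satisfy Σ_{j=1}^k f_j(λ̂_i)(F_j + δF_j) v_i = 0 for all i = 1,…,p, then ‖[δF_1, …, δF_k]‖_F ≥ max_{i=1,…,p} σ̂_i / √(Σ_{j=1}^k |f_j(λ̂_i)|²). Consequently the eigenvalue backward error η (the minimum of ‖[δF_1, …, δF_k]‖_F over all such perturbations and all choices of nonzero vectors v_i) satisfies η ≥ max_{i} σ̂_i / √(Σ_j |f_j(λ̂_i)|²). -/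

import Mathlib

open Matrix Kronecker BigOperators

noncomputable section

/-- Frobenius norm of a complex matrix. -/
def fnorm {ι κ : Type*} [Fintype ι] [Fintype κ] (A : Matrix ι κ ℂ) : ℝ :=
  Real.sqrt (∑ i, ∑ j, ‖A i j‖ ^ 2)

/-- Euclidean norm of a complex vector. -/
def vnorm {ι : Type*} [Fintype ι] (v : ι → ℂ) : ℝ :=
  Real.sqrt (∑ i, ‖v i‖ ^ 2)

/-- The four Moore–Penrose conditions. -/
def IsMoorePenrose {ι κ : Type*} [Fintype ι] [Fintype κ]
    (A : Matrix ι κ ℂ) (B : Matrix κ ι ℂ) : Prop :=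
  A * B * A = A ∧ B * A * B = B ∧ (A * B)ᴴ = A * B ∧ (B * A)ᴴ = B * A

open scoped Classical in
/-- The Moore–Penrose pseudoinverse (defined by choice; it always exists and is unique). -/
noncomputable def pinv {ι κ : Type*} [Fintype ι] [Fintype κ] (A : Matrix ι κ ℂ) :
    Matrix κ ι ℂ :=
  if h : ∃ B, IsMoorePenrose A B then h.choose else 0

/-- `s` is a singular value of `A`: `s ≥ 0` and `s²` is an eigenvalue of `Aᴴ A`. -/
def IsSingularValue {ι κ : Type*} [Fintype ι] [Fintype κ] (A : Matrix ι κ ℂ) (s : ℝ) : Prop :=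
  0 ≤ s ∧ ∃ w : κ → ℂ, w ≠ 0 ∧ (Aᴴ * A).mulVec w = ((s : ℂ) ^ 2) • w

/-- The smallest nonzero singular value of `A`, i.e. `σ_p̂(A)` where `p̂ = rank A`. -/
noncomputable def sigmaMinPos {ι κ : Type*} [Fintype ι] [Fintype κ] (A : Matrix ι κ ℂ) : ℝ :=
  sInf {s : ℝ | IsSingularValue A s ∧ 0 < s}

/-- The smallest singular value of a square matrix `A`, the minimum of `‖A v‖₂` over
unit vectors `v`. -/
noncomputable def sigmaMinSq {n : ℕ} (A : Matrix (Fin n) (Fin n) ℂ) : ℝ :=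
  sInf {x : ℝ | ∃ w : Fin n → ℂ, vnorm w = 1 ∧ x = vnorm (A.mulVec w)}

/-- The transposed Khatri–Rao product `G ⊙^T W` of `G : p × k` and `W : p × n`:
the `p × kn` matrix whose `i`-th row is `[G i 1 • (row i of W), …, G i k • (row i of W)]`. -/
def krt {p k n : ℕ} (G : Matrix (Fin p) (Fin k) ℂ) (W : Matrix (Fin p) (Fin n) ℂ) :
    Matrix (Fin p) (Fin k × Fin n) ℂ :=
  Matrix.of fun i jl => G i jl.1 * W i jl.2

/-!
Put `δF = [δF₁, …, δFₖ]` in one `n × kn` matrix and write `c ⊗ v` for the vector with blocks `cⱼ v`.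
Then `∑ⱼ cⱼ (Fⱼ + δFⱼ) v = 0` reads `(∑ⱼ cⱼ Fⱼ) v = -δF (c ⊗ v)`, whose left side has norm at least
`σ_n(∑ⱼ cⱼ Fⱼ) ‖v‖` and whose right side has norm at most `‖δF‖_F ‖c‖ ‖v‖`.
-/

/-- The block row `[A₁, …, Aₖ]` of a family of matrices, the argument of the Frobenius norm in
the backward error. A column is indexed by its block and its position in that block. -/
def blockRow {κ μ ν : Type*} (A : κ → Matrix μ ν ℂ) : Matrix μ (κ × ν) ℂ :=
  Matrix.of fun m jl => A jl.1 m jl.2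

/-- The vector `c ⊗ v`, with blocks `c j • v`, on which block rows act. -/
def tensorVec {κ ν : Type*} (c : κ → ℂ) (v : ν → ℂ) : κ × ν → ℂ :=
  fun jl => c jl.1 * v jl.2

/-- The eigenvalue backward error `η`: the infimum of `‖[δF₁, …, δFₖ]‖_F` over all perturbations
for which every `∑ⱼ c i j • (Fⱼ + δFⱼ)` is singular, where `c i j` stands for `fⱼ(λ̂ᵢ)`. -/
def eigenvalueBackwardError {ι κ ν : Type*} [Fintype κ] [Fintype ν]
    (F : κ → Matrix ν ν ℂ) (c : ι → κ → ℂ) : ℝ :=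
  sInf {x : ℝ | ∃ (δF : κ → Matrix ν ν ℂ) (v : ι → ν → ℂ),
    (∀ i, v i ≠ 0) ∧
    (∀ i, ∑ j, c i j • ((F j + δF j).mulVec (v i)) = 0) ∧
    x = fnorm (blockRow δF)}

section Norms

variable {ι κ : Type*} [Fintype ι] [Fintype κ]

lemma vnorm_eq_norm_toLp (v : ι → ℂ) : vnorm v = ‖WithLp.toLp 2 v‖ :=
  (EuclideanSpace.norm_eq _).symm

lemma fnorm_nonneg (A : Matrix ι κ ℂ) : 0 ≤ fnorm A :=
  Real.sqrt_nonneg _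

lemma vnorm_nonneg (v : ι → ℂ) : 0 ≤ vnorm v :=
  Real.sqrt_nonneg _

lemma vnorm_smul (a : ℂ) (v : ι → ℂ) : vnorm (a • v) = ‖a‖ * vnorm v := by
  simp only [vnorm_eq_norm_toLp, WithLp.toLp_smul, norm_smul]

lemma vnorm_neg (v : ι → ℂ) : vnorm (-v) = vnorm v := by
  simp only [vnorm_eq_norm_toLp, WithLp.toLp_neg, norm_neg]

lemma vnorm_pos {v : ι → ℂ} (hv : v ≠ 0) : 0 < vnorm v := by
  rw [vnorm_eq_norm_toLp, norm_pos_iff]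
  exact (WithLp.toLp_eq_zero 2).not.mpr hv

lemma vnorm_tensorVec (c : κ → ℂ) (v : ι → ℂ) :
    vnorm (tensorVec c v) = vnorm c * vnorm v := by
  unfold vnorm tensorVec
  rw [← Real.sqrt_mul (by positivity), Fintype.sum_mul_sum, Fintype.sum_prod_type]
  simp only [norm_mul, mul_pow]

open scoped Matrix.Norms.Frobenius in
lemma fnorm_eq_norm (A : Matrix ι κ ℂ) : fnorm A = ‖A‖ := by
  rw [fnorm, Matrix.frobenius_norm_def, Real.sqrt_eq_rpow]
  simp only [Real.rpow_two]

open scoped Matrix.Norms.Frobenius in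
lemma vnorm_mulVec_le (A : Matrix ι κ ℂ) (v : κ → ℂ) :
    vnorm (A *ᵥ v) ≤ fnorm A * vnorm v := by
  simp only [vnorm_eq_norm_toLp, fnorm_eq_norm,
    ← Matrix.frobenius_norm_replicateCol (ι := Unit), Matrix.replicateCol_mulVec]
  exact Matrix.frobenius_norm_mul A _

end Norms

lemma sigmaMinSq_mul_vnorm_le {n : ℕ} (A : Matrix (Fin n) (Fin n) ℂ) (v : Fin n → ℂ) :
    sigmaMinSq A * vnorm v ≤ vnorm (A *ᵥ v) := by
  rcases eq_or_ne v 0 with rfl | hv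
  · simp [vnorm]
  have hpos := vnorm_pos hv
  have hnorm : ‖(vnorm v : ℂ)⁻¹‖ = (vnorm v)⁻¹ := by
    rw [norm_inv, Complex.norm_real, Real.norm_of_nonneg hpos.le]
  have hunit : vnorm ((vnorm v : ℂ)⁻¹ • v) = 1 := by
    rw [vnorm_smul, hnorm, inv_mul_cancel₀ hpos.ne']
  have hbdd : BddBelow {x : ℝ | ∃ w : Fin n → ℂ, vnorm w = 1 ∧ x = vnorm (A *ᵥ w)} :=
    ⟨0, by rintro _ ⟨w, -, rfl⟩; exact vnorm_nonneg _⟩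
  rw [← le_div_iff₀ hpos]
  calc
    sigmaMinSq A ≤ vnorm (A *ᵥ ((vnorm v : ℂ)⁻¹ • v)) := csInf_le hbdd ⟨_, hunit, rfl⟩
    _ = vnorm (A *ᵥ v) / vnorm v := by
      rw [Matrix.mulVec_smul, vnorm_smul, hnorm, inv_mul_eq_div]

section BlockRow

variable {κ μ ν : Type*} [Fintype κ] [Fintype ν]

lemma blockRow_mulVec_tensorVec (A : κ → Matrix μ ν ℂ) (c : κ → ℂ) (v : ν → ℂ) :
    blockRow A *ᵥ tensorVec c v = ∑ j, c j • (A j *ᵥ v) := by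
  ext m
  simp only [blockRow, tensorVec, Matrix.mulVec, dotProduct, Matrix.of_apply,
    Fintype.sum_prod_type, Finset.sum_apply, Pi.smul_apply, smul_eq_mul, Finset.mul_sum,
    mul_left_comm]

lemma sum_smul_mulVec_eq_neg_blockRow_mulVec {F δF : κ → Matrix μ ν ℂ} {c : κ → ℂ} {v : ν → ℂ}
    (h : ∑ j, c j • ((F j + δF j) *ᵥ v) = 0) :
    (∑ j, c j • F j) *ᵥ v = -(blockRow δF *ᵥ tensorVec c v) := by
  simp only [Matrix.add_mulVec, smul_add, Finset.sum_add_distrib] at h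
  rw [blockRow_mulVec_tensorVec, Matrix.sum_mulVec]
  simpa only [Matrix.smul_mulVec] using eq_neg_of_add_eq_zero_left h

end BlockRow

lemma sigmaMinSq_div_vnorm_le_fnorm_blockRow {κ : Type*} [Fintype κ] {n : ℕ}
    {F δF : κ → Matrix (Fin n) (Fin n) ℂ} {c : κ → ℂ} {v : Fin n → ℂ} (hv : v ≠ 0)
    (h : ∑ j, c j • ((F j + δF j) *ᵥ v) = 0) :
    sigmaMinSq (∑ j, c j • F j) / vnorm c ≤ fnorm (blockRow δF) := by
  refine div_le_of_le_mul₀ (vnorm_nonneg c) (fnorm_nonneg _) ?_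
  refine le_of_mul_le_mul_right ?_ (vnorm_pos hv)
  calc
    sigmaMinSq (∑ j, c j • F j) * vnorm v
        ≤ vnorm ((∑ j, c j • F j) *ᵥ v) := sigmaMinSq_mul_vnorm_le _ v
    _ = vnorm (blockRow δF *ᵥ tensorVec c v) := by
      rw [sum_smul_mulVec_eq_neg_blockRow_mulVec h, vnorm_neg]
    _ ≤ fnorm (blockRow δF) * vnorm (tensorVec c v) := vnorm_mulVec_le _ _
    _ = fnorm (blockRow δF) * vnorm c * vnorm v := by rw [vnorm_tensorVec, mul_assoc]

lemma le_eigenvalueBackwardError {ι κ ν : Type*} [Fintype κ] [Fintype ν] [Nonempty ν]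
    {F : κ → Matrix ν ν ℂ} {c : ι → κ → ℂ} {b : ℝ}
    (hb : ∀ (δF : κ → Matrix ν ν ℂ) (v : ι → ν → ℂ), (∀ i, v i ≠ 0) →
      (∀ i, ∑ j, c i j • ((F j + δF j) *ᵥ v i) = 0) → b ≤ fnorm (blockRow δF)) :
    b ≤ eigenvalueBackwardError F c := by
  refine le_csInf ?_ ?_
  · -- The perturbation `δF = -F` makes every vector an eigenvector.
    exact ⟨_, -F, 1, fun _ => one_ne_zero, fun i => by simp, rfl⟩
  · rintro _ ⟨δF, v, hv, h, rfl⟩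
    exact hb δF v hv h

theorem eigenvalue_backward_error_lower_bound_general {ι κ : Type*} [Fintype κ] {n : ℕ}
    (hn : 0 < n) (F : κ → Matrix (Fin n) (Fin n) ℂ) (c : ι → κ → ℂ) :
    (∀ (δF : κ → Matrix (Fin n) (Fin n) ℂ) (v : ι → Fin n → ℂ),
        (∀ i, v i ≠ 0) →
        (∀ i, ∑ j, c i j • ((F j + δF j) *ᵥ v i) = 0) →
        ∀ i, sigmaMinSq (∑ j, c i j • F j) / vnorm (c i) ≤ fnorm (blockRow δF)) ∧
    ∀ i, sigmaMinSq (∑ j, c i j • F j) / vnorm (c i) ≤ eigenvalueBackwardError F c := by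
  have : Nonempty (Fin n) := Fin.pos_iff_nonempty.mp hn
  exact ⟨fun δF v hv h i => sigmaMinSq_div_vnorm_le_fnorm_blockRow (hv i) (h i),
    fun i => le_eigenvalueBackwardError fun δF v hv h =>
      sigmaMinSq_div_vnorm_le_fnorm_blockRow (hv i) (h i)⟩

/-- Lower bound for the eigenvalue backward error: if the perturbed problem has the `λ̂ᵢ` as
eigenvalues (with some nonzero eigenvectors `vᵢ`), then
`‖[δF₁, …, δFₖ]‖_F ≥ σ̂ᵢ / √(∑ⱼ |fⱼ(λ̂ᵢ)|²)` for every `i`, where `σ̂ᵢ` is the smallest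
singular value of `F(λ̂ᵢ) = ∑ⱼ fⱼ(λ̂ᵢ) Fⱼ`; consequently the eigenvalue backward error `η`
satisfies `η ≥ max_i σ̂ᵢ / √(∑ⱼ |fⱼ(λ̂ᵢ)|²)`. -/
theorem eigenvalue_backward_error_lower_bound (n k p : ℕ) (hn : 0 < n)
    (F : Fin k → Matrix (Fin n) (Fin n) ℂ)
    (f : Fin k → ℂ → ℂ) (lam : Fin p → ℂ)
    (sig : Fin p → ℝ)
    (hsig : ∀ i, sig i = sigmaMinSq (∑ j, f j (lam i) • F j)) :
    (∀ (δF : Fin k → Matrix (Fin n) (Fin n) ℂ) (v : Fin p → Fin n → ℂ),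
        (∀ i, v i ≠ 0) →
        (∀ i, ∑ j, f j (lam i) • ((F j + δF j).mulVec (v i)) = 0) →
        ∀ i, sig i / Real.sqrt (∑ j, ‖f j (lam i)‖ ^ 2) ≤
          fnorm (Matrix.of fun (m : Fin n) (jl : Fin k × Fin n) => δF jl.1 m jl.2)) ∧
    (∀ i, sig i / Real.sqrt (∑ j, ‖f j (lam i)‖ ^ 2) ≤
      sInf {x : ℝ | ∃ (δF : Fin k → Matrix (Fin n) (Fin n) ℂ) (v : Fin p → Fin n → ℂ),
        (∀ i, v i ≠ 0) ∧
        (∀ i, ∑ j, f j (lam i) • ((F j + δF j).mulVec (v i)) = 0) ∧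
        x = fnorm (Matrix.of fun (m : Fin n) (jl : Fin k × Fin n) => δF jl.1 m jl.2)}) := by
  obtain rfl := funext hsig
  exact eigenvalue_backward_error_lower_bound_general hn F fun i j => f j (lam i)
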